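/- arXiv:2310.15462 — 5 statements merged into one kernel-verified Lean document; each statement's English description precedes it below -/
import Mathlib

section
/- Let m and (m_n)_{n≥1} be measures on a measurable space (U, 𝓖) with m σ-finite, such that m_n(A) ≤ m_{n+1}(A) for every A ∈ 𝓖 and every n, and lim_{n→∞} m_n(A) = m(A) for every A ∈ 𝓖. Then for every k ≥ 1 the k-fold product measures satisfy m_n^k(A) ≤ m_{n+1}^k(A) for every A in the product σ-algebra 𝓖^{⊗k} and every n, and lim_{n→∞} m_n^k(A) = m^k(A) for every A ∈ 𝓖^{⊗k}. -/
open MeasureTheory Filter Topology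
open scoped ENNReal NNReal

theorem aux_prod_iSup {ι : Type*} (s : Finset ι) (f : ι → ℕ → ℝ≥0∞) (hf : ∀ i, Monotone (f i)) :
    ⨆ n, ∏ i ∈ s, f i n = ∏ i ∈ s, ⨆ n, f i n := by
  classical
  induction s using Finset.induction_on with
  | empty => simp
  | insert a s ha ih =>
    simp only [Finset.prod_insert ha]
    rw [← ih, ENNReal.iSup_mul]
    simp only [ENNReal.mul_iSup]
    apply le_antisymm
    · exact iSup_le fun n => le_iSup_of_le n (le_iSup_of_le n le_rfl)
    · refine iSup_le fun n => iSup_le fun p => le_iSup_of_le (max n p) ?_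
      exact mul_le_mul' (hf a (le_max_left _ _))
        (Finset.prod_le_prod' fun i _ => hf i (le_max_right _ _))

theorem aux_pi_mono {U : Type*} [MeasurableSpace U] {k : ℕ} (μ ν : Measure U) (h : μ ≤ ν)
    (A : Set (Fin k → U)) (hA : MeasurableSet A) :
    Measure.pi (fun _ : Fin k => μ) A ≤ Measure.pi (fun _ : Fin k => ν) A := by
  rw [Measure.pi, Measure.pi, toMeasure_apply _ _ hA, toMeasure_apply _ _ hA]
  have : OuterMeasure.pi (fun _ : Fin k => μ.toOuterMeasure) ≤
      OuterMeasure.pi (fun _ : Fin k => ν.toOuterMeasure) := by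
    rw [OuterMeasure.le_pi]
    intro s _
    exact (OuterMeasure.pi_pi_le _ s).trans (Finset.prod_le_prod' fun i _ => h (s i))
  exact this A

theorem aux_tsum_iSup (f : ℕ → ℕ → ℝ≥0∞) (hf : ∀ i, Monotone (f i)) :
    ⨆ n, ∑' i, f i n = ∑' i, ⨆ n, f i n := by
  simp only [ENNReal.tsum_eq_iSup_sum]
  rw [iSup_comm]
  exact iSup_congr fun s => (ENNReal.finsetSum_iSup_of_monotone hf).symm

theorem aux_iSup_measure {X : Type*} [MeasurableSpace X] (μ : ℕ → Measure X)
    (h : ∀ A, MeasurableSet A → Monotone fun n => μ n A) :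
    ∃ ν : Measure X, ∀ A, MeasurableSet A → ν A = ⨆ n, μ n A := by
  refine ⟨Measure.ofMeasurable (fun A _ => ⨆ n, μ n A) (by simp) ?_, fun A hA =>
    Measure.ofMeasurable_apply A hA⟩
  intro f hf hd
  rw [← aux_tsum_iSup _ fun i => h _ (hf i)]
  exact iSup_congr fun n => measure_iUnion hd hf

/-- If `m` is σ-finite and the measures `m n` (each σ-finite, since
`m n ≤ m`) increase setwise to `m`, then for every `k ≥ 1` the `k`-fold product measures
increase setwise and converge setwise to the `k`-fold product of `m`. -/
theorem pi_tendsto_of_setwise_monotone_limit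
    {U : Type*} [MeasurableSpace U] (m : Measure U) [SigmaFinite m]
    (mseq : ℕ → Measure U) [∀ n, SigmaFinite (mseq n)]
    (hmono : ∀ A : Set U, MeasurableSet A → ∀ n : ℕ, mseq n A ≤ mseq (n + 1) A)
    (hlim : ∀ A : Set U, MeasurableSet A →
      Tendsto (fun n => mseq n A) atTop (𝓝 (m A)))
    (k : ℕ) (hk : 1 ≤ k) :
    (∀ A : Set (Fin k → U), MeasurableSet A → ∀ n : ℕ,
        Measure.pi (fun _ : Fin k => mseq n) A ≤ Measure.pi (fun _ : Fin k => mseq (n + 1)) A) ∧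
      (∀ A : Set (Fin k → U), MeasurableSet A →
        Tendsto (fun n => Measure.pi (fun _ : Fin k => mseq n) A) atTop
          (𝓝 (Measure.pi (fun _ : Fin k => m) A))) := by
  have hm : Monotone mseq := monotone_nat_of_le_succ fun n =>
    Measure.le_iff.2 fun A hA => hmono A hA n
  have hpm : ∀ A : Set (Fin k → U), MeasurableSet A →
      Monotone fun n => Measure.pi (fun _ : Fin k => mseq n) A :=
    fun A hA i j hij => aux_pi_mono _ _ (hm hij) A hA
  refine ⟨fun A hA n => hpm A hA n.le_succ, fun A hA => ?_⟩
  obtain ⟨ν, hν⟩ := aux_iSup_measure (fun n => Measure.pi (fun _ : Fin k => mseq n)) hpm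
  have key : Measure.pi (fun _ : Fin k => m) = ν := by
    refine Measure.pi_eq fun s hs => ?_
    rw [hν _ (MeasurableSet.univ_pi hs)]
    simp only [Measure.pi_pi]
    rw [aux_prod_iSup _ (fun i n => mseq n (s i)) fun i a b hab => hm hab (s i)]
    refine Finset.prod_congr rfl fun i _ => ?_
    exact tendsto_nhds_unique
      (tendsto_atTop_iSup fun a b hab => hm hab (s i)) (hlim _ (hs i))
  rw [key, hν A hA]
  exact tendsto_atTop_iSup (hpm A hA)
end

section
/- Under Assumption 2.1, for every fixed k ≥ 1 and every f ∈ L²(μ^k), one has (n/a_n)^{k/2} ∫_{E^k} f dP_n^k → 0 as n → ∞. (Note that f ∈ L²(μ^k) together with (n/a_n)P_n ≤ μ implies f ∈ L²(P_n^k) ⊆ L¹(P_n^k), so the integrals are well defined.) -/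
open MeasureTheory Filter Topology
open scoped ENNReal NNReal

/-- **Assumption 2.1** of the paper, for data `(μ, a, P)`. -/
def Assumption21 {E : Type*} [MeasurableSpace E] (μ : Measure E) (a : ℕ → ℝ)
    (P : ℕ → Measure E) : Prop :=
  μ Set.univ = ∞ ∧
  (∀ n : ℕ, 1 ≤ n → 0 < a n) ∧
  Tendsto a atTop atTop ∧
  Tendsto (fun n : ℕ => a n / n) atTop (𝓝 0) ∧
  (∀ B : Set E, MeasurableSet B → ∀ n : ℕ, 1 ≤ n →
    ENNReal.ofReal ((n : ℝ) / a n) * P n B ≤ ENNReal.ofReal (((n : ℝ) + 1) / a (n + 1)) * P (n + 1) B) ∧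
  (∀ B : Set E, MeasurableSet B →
    Tendsto (fun n : ℕ => ENNReal.ofReal ((n : ℝ) / a n) * P n B) atTop (𝓝 (μ B)))

theorem aux_pi_le {E : Type*} [MeasurableSpace E] (μ P : Measure E) [IsProbabilityMeasure P]
    (c : ℝ≥0∞) (h : c • P ≤ μ) (k : ℕ) :
    (c ^ k) • (Measure.pi fun _ : Fin k => P) ≤ Measure.pi fun _ : Fin k => μ := by
  have key : ((c ^ k) • (Measure.pi fun _ : Fin k => P)).toOuterMeasure ≤
      OuterMeasure.pi fun _ : Fin k => μ.toOuterMeasure := by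
    rw [OuterMeasure.le_pi]
    intro s _
    change ((c ^ k) • (Measure.pi fun _ : Fin k => P)) (Set.univ.pi s) ≤ ∏ i, μ (s i)
    rw [Measure.smul_apply, Measure.pi_pi, smul_eq_mul]
    calc c ^ k * ∏ i, P (s i) = ∏ i : Fin k, (c * P (s i)) := by
          simp [Finset.prod_mul_distrib]
      _ ≤ ∏ i, μ (s i) := Finset.prod_le_prod' fun i _ => by
          simpa using h (s i)
  rw [Measure.le_iff]
  intro s hs
  rw [Measure.pi_def (fun _ : Fin k => μ), toMeasure_apply _ _ hs]
  exact key s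

theorem aux_memLp {Ω : Type*} [MeasurableSpace Ω] {M Q : Measure Ω}
    {s : ℝ} (hs : 0 < s) (h : ENNReal.ofReal (s ^ 2) • Q ≤ M) (p : ℝ≥0∞) {f : Ω → ℝ}
    (hf : MemLp f p M) : MemLp f p Q := by
  have h0 : ENNReal.ofReal (s ^ 2) ≠ 0 := by simpa using hs.ne'
  refine hf.of_measure_le_smul (c := (ENNReal.ofReal (s ^ 2))⁻¹) (by simpa using hs.ne') ?_
  intro t
  have := h t
  simp only [Measure.smul_apply, smul_eq_mul] at this ⊢
  rw [← ENNReal.div_eq_inv_mul, ENNReal.le_div_iff_mul_le (Or.inl h0) (Or.inl ENNReal.ofReal_ne_top),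
    mul_comm]
  exact this

theorem aux_L2 {Ω : Type*} [MeasurableSpace Ω] {M Q : Measure Ω} [IsProbabilityMeasure Q]
    {s : ℝ} (hs : 0 < s) (h : ENNReal.ofReal (s ^ 2) • Q ≤ M) {f : Ω → ℝ}
    (hf : MemLp f 2 M) : ‖s * ∫ u, f u ∂Q‖ₑ ≤ eLpNorm f 2 M := by
  have hQ := aux_memLp hs h 2 hf
  calc ‖s * ∫ u, f u ∂Q‖ₑ = ENNReal.ofReal s * ‖∫ u, f u ∂Q‖ₑ := by
        rw [enorm_mul, Real.enorm_of_nonneg hs.le]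
    _ ≤ ENNReal.ofReal s * eLpNorm f 1 Q := by
        gcongr
        rw [eLpNorm_one_eq_lintegral_enorm]
        exact enorm_integral_le_lintegral_enorm _
    _ ≤ ENNReal.ofReal s * eLpNorm f 2 Q := by
        gcongr
        exact eLpNorm_le_eLpNorm_of_exponent_le (by norm_num) hQ.1
    _ = eLpNorm f 2 (ENNReal.ofReal (s ^ 2) • Q) := by
        rw [eLpNorm_smul_measure_of_ne_top (by norm_num), smul_eq_mul,
          ENNReal.ofReal_rpow_of_nonneg (by positivity) (by positivity)]
        congr 2
        rw [← Real.rpow_natCast, ← Real.rpow_mul hs.le]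
        simp
    _ ≤ _ := eLpNorm_mono_measure _ h

theorem aux_L1 {Ω : Type*} [MeasurableSpace Ω] {M Q : Measure Ω}
    {s : ℝ} (hs : 0 < s) (h : ENNReal.ofReal (s ^ 2) • Q ≤ M) (f : Ω → ℝ) :
    ‖s * ∫ u, f u ∂Q‖ₑ ≤ ENNReal.ofReal s⁻¹ * eLpNorm f 1 M := by
  calc ‖s * ∫ u, f u ∂Q‖ₑ = ENNReal.ofReal s * ‖∫ u, f u ∂Q‖ₑ := by
        rw [enorm_mul, Real.enorm_of_nonneg hs.le]
    _ ≤ ENNReal.ofReal s * eLpNorm f 1 Q := by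
        gcongr
        rw [eLpNorm_one_eq_lintegral_enorm]
        exact enorm_integral_le_lintegral_enorm _
    _ = ENNReal.ofReal s⁻¹ * eLpNorm f 1 (ENNReal.ofReal (s ^ 2) • Q) := by
        rw [eLpNorm_one_smul_measure, ← mul_assoc, ← ENNReal.ofReal_mul (by positivity)]
        congr 2
        field_simp
    _ ≤ _ := by
        gcongr

/-- Under Assumption 2.1, for fixed `k ≥ 1` and `f ∈ L²(μ^k)`,
`(n/a_n)^{k/2} ∫_{E^k} f dP_n^k → 0` as `n → ∞`. -/
theorem sqrt_pow_mul_integral_pi_tendsto_zero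
    {E : Type*} [MeasurableSpace E] (μ : Measure E) [SigmaFinite μ] [NullSingletonClass μ]
    (a : ℕ → ℝ) (P : ℕ → Measure E) [∀ n, IsProbabilityMeasure (P n)]
    (h21 : Assumption21 μ a P)
    (k : ℕ) (hk : 1 ≤ k) (f : (Fin k → E) → ℝ)
    (hf : MemLp f 2 (Measure.pi fun _ : Fin k => μ)) :
    Tendsto (fun n : ℕ =>
        Real.sqrt ((n : ℝ) / a n) ^ k * ∫ u, f u ∂(Measure.pi fun _ : Fin k => P n))
      atTop (𝓝 0) := by
  obtain ⟨-, ha, -, ha0, hmono, hlim⟩ := h21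
  set M := Measure.pi fun _ : Fin k => μ with hM
  set s : ℕ → ℝ := fun n => Real.sqrt ((n : ℝ) / a n) ^ k with hsdef
  have hspos : ∀ n, 1 ≤ n → 0 < s n := fun n hn => by
    have h1 := ha n hn
    have h2 : (0 : ℝ) < n := by exact_mod_cast hn
    simp only [hsdef]
    positivity
  have hle : ∀ n, 1 ≤ n →
      ENNReal.ofReal (s n ^ 2) • (Measure.pi fun _ : Fin k => P n) ≤ M := fun n hn => by
    have h1 := ha n hn
    have e : s n ^ 2 = ((n : ℝ) / a n) ^ k := by
      simp only [hsdef]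
      rw [← pow_mul, mul_comm, pow_mul, Real.sq_sqrt (by positivity)]
    rw [e, ENNReal.ofReal_pow (by positivity)]
    apply aux_pi_le
    rw [Measure.le_iff]
    intro B hB
    rw [Measure.smul_apply, smul_eq_mul]
    have hm : ∀ m, n ≤ m → ENNReal.ofReal ((n : ℝ) / a n) * P n B ≤
        ENNReal.ofReal ((m : ℝ) / a m) * P m B := by
      intro m hm
      induction m, hm using Nat.le_induction with
      | base => exact le_rfl
      | succ m hm ih =>
        refine ih.trans ?_
        have := hmono B hB m (hn.trans hm)
        simpa using this
    exact ge_of_tendsto (hlim B hB) (eventually_atTop.2 ⟨n, hm⟩)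
  have hsinv : Tendsto (fun n => (s n)⁻¹) atTop (𝓝 0) := by
    have h1 : Tendsto (fun n : ℕ => Real.sqrt (a n / n) ^ k) atTop (𝓝 0) := by
      have := ((Real.continuous_sqrt.tendsto 0).comp ha0).pow k
      simpa [Function.comp_def, zero_pow (by omega : k ≠ 0)] using this
    refine h1.congr fun n => ?_
    simp only [hsdef]
    rw [← inv_pow, ← Real.sqrt_inv, inv_div]
  rw [tendsto_zero_iff_enorm_tendsto_zero]
  rw [ENNReal.tendsto_nhds_zero]
  intro ε hε
  obtain ⟨g, hg, hg2⟩ := hf.exists_simpleFunc_eLpNorm_sub_lt (by norm_num)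
    (ε := ε / 2) (ENNReal.half_pos hε.ne').ne'
  have hgi : MemLp g 1 M :=
    memLp_one_iff_integrable.2 ((SimpleFunc.memLp_iff_integrable (by norm_num) (by norm_num)).1 hg2)
  have hlim1 : Tendsto (fun n => ENNReal.ofReal (s n)⁻¹ * eLpNorm g 1 M) atTop (𝓝 0) := by
    have := ENNReal.Tendsto.mul_const (b := eLpNorm g 1 M) (ENNReal.tendsto_ofReal hsinv)
      (Or.inr hgi.2.ne)
    simpa using this
  filter_upwards [ENNReal.tendsto_nhds_zero.1 hlim1 (ε / 2) (ENNReal.half_pos hε.ne'),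
    eventually_ge_atTop 1] with n hn1 hn
  have hs := hspos n hn
  have hl := hle n hn
  have hfQ := (aux_memLp hs hl 2 hf).integrable (by norm_num)
  have hgQ := (aux_memLp hs hl 1 hgi).integrable (by norm_num)
  have e : s n * ∫ u, f u ∂(Measure.pi fun _ : Fin k => P n) =
      s n * ∫ u, (f - g) u ∂(Measure.pi fun _ : Fin k => P n) +
      s n * ∫ u, g u ∂(Measure.pi fun _ : Fin k => P n) := by
    rw [← mul_add]
    congr 1
    have := integral_sub hfQ hgQ
    simp only [Pi.sub_apply]
    rw [this]
    ring
  rw [e]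
  calc _ ≤ _ := enorm_add_le _ _
    _ ≤ ε / 2 + ε / 2 := add_le_add ((aux_L2 hs hl (hf.sub hg2)).trans hg.le)
        ((aux_L1 hs hl g).trans hn1)
    _ = ε := ENNReal.add_halves ε
end

section
/- Under Assumption 2.1, for every k ≥ 1 and all f, g ∈ L²(μ^k), one has (n/a_n)^k ∫_{E^k} f̃(u) g̃(u) dP_n^k(u) → ⟨f̃, g̃⟩_{L²(μ^k)} = ∫_{E^k} f̃ g̃ dμ^k as n → ∞, where f̃ and g̃ are the symmetrizations of f and g. (The product f̃ g̃ belongs to L¹(μ^k) by the Cauchy–Schwarz inequality.) -/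
open MeasureTheory Filter Topology
open scoped ENNReal NNReal

/-- The symmetrization `f̃` of a function of `k` variables. -/
noncomputable def symmetrize {E : Type*} (k : ℕ) (f : (Fin k → E) → ℝ) :
    (Fin k → E) → ℝ :=
  fun u => (k.factorial : ℝ)⁻¹ * ∑ σ : Equiv.Perm (Fin k), f (u ∘ σ)

lemma aux_lintegral_prod {E : Type*} [MeasurableSpace E] (μ : Measure E) [SigmaFinite μ]
    (k : ℕ) (f : Fin k → E → ℝ≥0∞) (hf : ∀ i, Measurable (f i)) :
    ∫⁻ x, ∏ i, f i (x i) ∂(Measure.pi fun _ : Fin k => μ) = ∏ i, ∫⁻ x, f i x ∂μ := by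
  induction k with
  | zero => simp
  | succ n ih =>
    rw [← ((measurePreserving_piFinSuccAbove (fun _ : Fin (n + 1) => μ) 0).symm).lintegral_comp_emb
      (MeasurableEquiv.measurableEmbedding _)]
    have h : ∀ x : E × (Fin n → E), (∏ i, f i ((MeasurableEquiv.piFinSuccAbove
        (fun _ : Fin (n + 1) => E) 0).symm x i)) = f 0 x.1 * ∏ i : Fin n, f i.succ (x.2 i) := by
      intro x
      simp [MeasurableEquiv.piFinSuccAbove_symm_apply, Fin.insertNthEquiv, Fin.prod_univ_succ]
    simp_rw [h]
    rw [lintegral_prod_mul (f := f 0) (g := fun y : Fin n → E => ∏ i : Fin n, f i.succ (y i))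
      (hf 0).aemeasurable
      (Finset.measurable_prod _ fun i _ => (hf i.succ).comp (measurable_pi_apply i)).aemeasurable,
      ih _ fun i => hf i.succ, Fin.prod_univ_succ]

lemma aux_pi_withDensity {E : Type*} [MeasurableSpace E] (μ : Measure E) [SigmaFinite μ]
    (k : ℕ) (φ : E → ℝ≥0∞) (hφ : Measurable φ) [SigmaFinite (μ.withDensity φ)] :
    (Measure.pi fun _ : Fin k => μ.withDensity φ) =
      (Measure.pi fun _ : Fin k => μ).withDensity (fun u => ∏ i, φ (u i)) := by
  refine Measure.pi_eq fun s hs => ?_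
  rw [withDensity_apply _ (MeasurableSet.univ_pi hs),
    ← lintegral_indicator (MeasurableSet.univ_pi hs)]
  have h : ∀ u : Fin k → E, (Set.univ.pi s).indicator (fun u => ∏ i, φ (u i)) u =
      ∏ i, (s i).indicator φ (u i) := by
    intro u
    by_cases hu : u ∈ Set.univ.pi s
    · rw [Set.indicator_of_mem hu]
      exact Finset.prod_congr rfl fun i _ => (Set.indicator_of_mem (hu i trivial) _).symm
    · rw [Set.indicator_of_notMem hu]
      simp only [Set.mem_pi, not_forall] at hu
      obtain ⟨i, _, hi⟩ := hu
      exact (Finset.prod_eq_zero (Finset.mem_univ i) (Set.indicator_of_notMem hi _)).symm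
  simp_rw [h]
  rw [aux_lintegral_prod μ k _ fun i => hφ.indicator (hs i)]
  exact Finset.prod_congr rfl fun i _ => by
    rw [lintegral_indicator (hs i), withDensity_apply _ (hs i)]

lemma aux_pi_smul {E : Type*} [MeasurableSpace E] (P : Measure E) [IsFiniteMeasure P]
    (k : ℕ) (c : ℝ≥0∞) (hc : c ≠ ∞) :
    (Measure.pi fun _ : Fin k => c • P) = c ^ k • (Measure.pi fun _ : Fin k => P) := by
  have := P.smul_finite hc
  refine Measure.pi_eq fun s hs => ?_
  simp [Measure.pi_pi, Finset.prod_mul_distrib]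

lemma aux_tendsto {E : Type*} [MeasurableSpace E] (μ : Measure E) [SigmaFinite μ]
    (ν : ℕ → Measure E) [∀ n, IsFiniteMeasure (ν n)] (hmono : Monotone ν)
    (hlim : ∀ B, MeasurableSet B → Tendsto (fun n => ν n B) atTop (𝓝 (μ B)))
    (k : ℕ) (h : (Fin k → E) → ℝ) (hh : Integrable h (Measure.pi fun _ : Fin k => μ)) :
    Tendsto (fun n => ∫ u, h u ∂(Measure.pi fun _ : Fin k => ν n)) atTop
      (𝓝 (∫ u, h u ∂(Measure.pi fun _ : Fin k => μ))) := by
  have hle : ∀ n, ν n ≤ μ := fun n => Measure.le_iff.2 fun s hs =>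
    Monotone.ge_of_tendsto (fun i j hij => hmono hij s) (hlim s hs) n
  have hac : ∀ n, ν n ≪ μ := fun n => Measure.absolutelyContinuous_of_le (hle n)
  set φ : ℕ → E → ℝ≥0∞ := fun n => (ν n).rnDeriv μ with hφdef
  have hφ : ∀ n, Measurable (φ n) := fun n => Measure.measurable_rnDeriv _ _
  have hwd : ∀ n, μ.withDensity (φ n) = ν n := fun n => Measure.withDensity_rnDeriv_eq _ _ (hac n)
  have h1 : ∀ᵐ x ∂μ, ∀ n, φ n x ≤ 1 :=
    ae_all_iff.2 fun n => Measure.rnDeriv_le_one_of_le (hle n)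
  have hset : ∀ n s, MeasurableSet s → ∫⁻ x in s, φ n x ∂μ = ν n s := fun n s hs => by
    rw [← withDensity_apply _ hs, hwd]
  have hm : ∀ᵐ x ∂μ, Monotone fun n => φ n x := by
    have : ∀ᵐ x ∂μ, ∀ n, φ n x ≤ φ (n + 1) x := ae_all_iff.2 fun n =>
      ae_le_of_forall_setLIntegral_le_of_sigmaFinite (hφ n) fun s hs _ => by
        rw [hset _ _ hs, hset _ _ hs]
        exact hmono n.le_succ s
    filter_upwards [this] with x hx using monotone_nat_of_le_succ hx
  have hsup : (fun x => ⨆ n, φ n x) =ᵐ[μ] fun _ => 1 := by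
    refine ae_eq_of_forall_setLIntegral_eq_of_sigmaFinite (Measurable.iSup hφ)
      measurable_const fun s hs _ => ?_
    rw [lintegral_iSup' (fun n => (hφ n).aemeasurable) (ae_restrict_of_ae hm)]
    simp_rw [hset _ s hs]
    rw [setLIntegral_one]
    exact tendsto_nhds_unique (tendsto_atTop_iSup fun i j hij => hmono hij s) (hlim s hs)
  have hto : ∀ᵐ x ∂μ, Tendsto (fun n => φ n x) atTop (𝓝 1) := by
    filter_upwards [hm, hsup] with x hx hx1
    have := tendsto_atTop_iSup hx
    rwa [hx1] at this
  have hpi : ∀ p : E → Prop, (∀ᵐ x ∂μ, p x) →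
      ∀ᵐ u ∂(Measure.pi fun _ : Fin k => μ), ∀ i, p (u i) := fun p hp =>
    ae_all_iff.2 fun i => (Measure.quasiMeasurePreserving_eval (fun _ : Fin k => μ) i).ae hp
  have h1' := hpi _ h1
  have hto' := hpi _ hto
  have hle1 : ∀ᵐ u ∂(Measure.pi fun _ : Fin k => μ), ∀ n, ∏ i, φ n (u i) ≤ 1 := by
    filter_upwards [h1'] with u hu n
    exact Finset.prod_le_one' fun i _ => hu i n
  have hmeas : ∀ n, Measurable fun u : Fin k → E => ∏ i, φ n (u i) := fun n =>
    Finset.measurable_prod _ fun i _ => (hφ n).comp (measurable_pi_apply i)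
  have key : ∀ n, ∫ u, h u ∂(Measure.pi fun _ : Fin k => ν n) =
      ∫ u, (∏ i, φ n (u i)).toReal • h u ∂(Measure.pi fun _ : Fin k => μ) := by
    intro n
    have : SigmaFinite (μ.withDensity (φ n)) := by rw [hwd]; infer_instance
    rw [← integral_withDensity_eq_integral_toReal_smul (hmeas n), ← aux_pi_withDensity μ k _ (hφ n)]
    · simp_rw [hwd]
    · filter_upwards [hle1] with u hu using (hu n).trans_lt ENNReal.one_lt_top
  simp_rw [key]
  refine tendsto_integral_of_dominated_convergence (fun u => ‖h u‖)
    (fun n => (hmeas n).ennreal_toReal.aestronglyMeasurable.smul hh.1) hh.norm ?_ ?_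
  · intro n
    filter_upwards [hle1] with u hu
    rw [norm_smul, Real.norm_of_nonneg ENNReal.toReal_nonneg]
    refine mul_le_of_le_one_left (norm_nonneg _) ?_
    exact ENNReal.toReal_le_of_le_ofReal zero_le_one (by simpa using hu n)
  · filter_upwards [hto'] with u hu
    have h2 : ∀ n, (∏ i, φ n (u i)).toReal = ∏ i, (φ n (u i)).toReal := fun n =>
      ENNReal.toReal_prod _ _
    have h3 : Tendsto (fun n => ∏ i, (φ n (u i)).toReal) atTop (𝓝 (∏ i : Fin k, (1 : ℝ))) :=
      tendsto_finsetProd _ fun i _ => by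
        simpa [Function.comp_def] using (ENNReal.tendsto_toReal ENNReal.one_ne_top).comp (hu i)
    simp_rw [h2]
    simpa using h3.smul_const (h u)

lemma aux_symm_memLp {E : Type*} [MeasurableSpace E] (μ : Measure E) [SigmaFinite μ]
    (k : ℕ) (f : (Fin k → E) → ℝ) (hf : MemLp f 2 (Measure.pi fun _ : Fin k => μ)) :
    MemLp (symmetrize k f) 2 (Measure.pi fun _ : Fin k => μ) := by
  suffices hs : ∀ σ ∈ (Finset.univ : Finset (Equiv.Perm (Fin k))),
      MemLp (fun u : Fin k → E => f (u ∘ σ)) 2 (Measure.pi fun _ : Fin k => μ) by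
    exact (memLp_finsetSum Finset.univ hs).const_mul (k.factorial : ℝ)⁻¹
  intro σ _
  have hp : MeasurePreserving (fun u : Fin k → E => u ∘ σ) (Measure.pi fun _ : Fin k => μ)
      (Measure.pi fun _ : Fin k => μ) := by
    have := measurePreserving_arrowCongr' (fun _ : Fin k => μ) (fun _ : Fin k => μ) σ.symm
      (MeasurableEquiv.refl E) (fun _ => MeasurePreserving.id μ)
    exact this
  exact hf.comp_measurePreserving hp

/-- Under Assumption 2.1, for `k ≥ 1` and `f, g ∈ L²(μ^k)`,
`(n/a_n)^k ∫ f̃ g̃ dP_n^k → ∫ f̃ g̃ dμ^k`. -/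
theorem integral_symmetrize_mul_tendsto
    {E : Type*} [MeasurableSpace E] (μ : Measure E) [SigmaFinite μ] [NullSingletonClass μ]
    (a : ℕ → ℝ) (P : ℕ → Measure E) [∀ n, IsProbabilityMeasure (P n)]
    (h21 : Assumption21 μ a P)
    (k : ℕ) (hk : 1 ≤ k) (f g : (Fin k → E) → ℝ)
    (hf : MemLp f 2 (Measure.pi fun _ : Fin k => μ))
    (hg : MemLp g 2 (Measure.pi fun _ : Fin k => μ)) :
    Tendsto (fun n : ℕ =>
        ((n : ℝ) / a n) ^ k *
          ∫ u, symmetrize k f u * symmetrize k g u ∂(Measure.pi fun _ : Fin k => P n))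
      atTop
      (𝓝 (∫ u, symmetrize k f u * symmetrize k g u ∂(Measure.pi fun _ : Fin k => μ))) := by
  obtain ⟨-, hapos, -, -, hmono, hlim⟩ := h21
  have hfin : ∀ n : ℕ, IsFiniteMeasure (ENNReal.ofReal ((n : ℝ) / a n) • P n) := fun n =>
    (P n).smul_finite ENNReal.ofReal_ne_top
  have hm : Monotone fun n : ℕ => ENNReal.ofReal ((n : ℝ) / a n) • P n := by
    refine monotone_nat_of_le_succ fun n => ?_
    rcases Nat.eq_zero_or_pos n with rfl | hn
    · simp [Measure.zero_le]
    · refine Measure.le_iff.2 fun s hs => ?_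
      simpa using hmono s hs n hn
  have hint : Integrable (fun u => symmetrize k f u * symmetrize k g u)
      (Measure.pi fun _ : Fin k => μ) :=
    (aux_symm_memLp μ k f hf).integrable_mul (aux_symm_memLp μ k g hg)
  have main := aux_tendsto μ (fun n : ℕ => ENNReal.ofReal ((n : ℝ) / a n) • P n) hm
    (fun B hB => by simpa using hlim B hB) k _ hint
  refine main.congr fun n => ?_
  rw [aux_pi_smul _ _ _ ENNReal.ofReal_ne_top, integral_smul_measure, ENNReal.toReal_pow,
    smul_eq_mul, ENNReal.toReal_ofReal]
  rcases Nat.eq_zero_or_pos n with rfl | hn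
  · simp
  · exact div_nonneg (Nat.cast_nonneg n) (hapos n hn).le
end

section
/- Under Assumption 2.1, let g = Σ_{k=1}^m c_k 𝟙_{B_k} with c_k ∈ ℝ and B_k ∈ 𝓔 satisfying μ(B_k) < ∞. Then (n/a_n)·(∫_E g² dP_n − (∫_E g dP_n)²) → ∫_E g² dμ as n → ∞. -/
open MeasureTheory Filter Topology
open scoped ENNReal NNReal

theorem aux_int {E : Type*} [MeasurableSpace E] (ν : Measure E)
    (m : ℕ) (c : Fin m → ℝ) (B : Fin m → Set E)
    (hB : ∀ i, MeasurableSet (B i)) (hf : ∀ i, ν (B i) < ∞) :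
    ∫ x, (∑ i : Fin m, Set.indicator (B i) (fun _ => c i) x) ∂ν
      = ∑ i, ν.real (B i) * c i := by
  rw [integral_finsetSum]
  · refine Finset.sum_congr rfl fun i _ => ?_
    rw [integral_indicator_const _ (hB i), smul_eq_mul]
  · intro i _
    exact (integrable_indicator_iff (hB i)).2 (integrableOn_const (hf i).ne)

theorem aux_int_sq {E : Type*} [MeasurableSpace E] (ν : Measure E)
    (m : ℕ) (c : Fin m → ℝ) (B : Fin m → Set E)
    (hB : ∀ i, MeasurableSet (B i)) (hf : ∀ i, ν (B i) < ∞) :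
    ∫ x, (∑ i : Fin m, Set.indicator (B i) (fun _ => c i) x) ^ 2 ∂ν
      = ∑ i, ∑ j, ν.real (B i ∩ B j) * (c i * c j) := by
  have h : ∀ x, (∑ i : Fin m, Set.indicator (B i) (fun _ => c i) x) ^ 2
      = ∑ i, ∑ j, Set.indicator (B i ∩ B j) (fun _ => c i * c j) x := by
    intro x
    rw [sq, Finset.sum_mul_sum]
    refine Finset.sum_congr rfl fun i _ => Finset.sum_congr rfl fun j _ => ?_
    by_cases h1 : x ∈ B i <;> by_cases h2 : x ∈ B j <;> simp [h1, h2]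
  have hi : ∀ i j, Integrable (Set.indicator (B i ∩ B j) (fun _ => c i * c j)) ν := fun i j =>
    (integrable_indicator_iff ((hB i).inter (hB j))).2
      (integrableOn_const ((measure_mono Set.inter_subset_left).trans_lt (hf i)).ne)
  simp_rw [h]
  rw [integral_finsetSum _ (fun i _ => integrable_finsetSum _ fun j _ => hi i j)]
  refine Finset.sum_congr rfl fun i _ => ?_
  rw [integral_finsetSum _ (fun j _ => hi i j)]
  refine Finset.sum_congr rfl fun j _ => ?_
  rw [integral_indicator_const _ ((hB i).inter (hB j)), smul_eq_mul]

/-- Under Assumption 2.1, for a simple function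
`g = Σ_{k=1}^m c_k 𝟙_{B_k}` with `μ(B_k) < ∞`, the normalized variance
`(n/a_n)(∫ g² dP_n − (∫ g dP_n)²)` converges to `∫ g² dμ`. -/
theorem variance_simple_tendsto
    {E : Type*} [MeasurableSpace E] (μ : Measure E) [SigmaFinite μ] [NullSingletonClass μ]
    (a : ℕ → ℝ) (P : ℕ → Measure E) [∀ n, IsProbabilityMeasure (P n)]
    (h21 : Assumption21 μ a P)
    (m : ℕ) (c : Fin m → ℝ) (B : Fin m → Set E)
    (hBmeas : ∀ i, MeasurableSet (B i)) (hBfin : ∀ i, μ (B i) < ∞)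
    (g : E → ℝ) (hgdef : g = fun x => ∑ i : Fin m, Set.indicator (B i) (fun _ => c i) x) :
    Tendsto (fun n : ℕ =>
        ((n : ℝ) / a n) * ((∫ x, g x ^ 2 ∂(P n)) - (∫ x, g x ∂(P n)) ^ 2))
      atTop (𝓝 (∫ x, g x ^ 2 ∂μ)) := by
  obtain ⟨-, hpos, -, han, -, hlim⟩ := h21
  have key : ∀ A : Set E, MeasurableSet A → μ A < ∞ →
      Tendsto (fun n : ℕ => ((n : ℝ) / a n) * (P n).real A) atTop (𝓝 (μ.real A)) := by
    intro A hA hAf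
    have h := (ENNReal.tendsto_toReal hAf.ne).comp (hlim A hA)
    refine h.congr' ?_
    filter_upwards [eventually_ge_atTop 1] with n hn
    have := hpos n hn
    simp only [Function.comp, ENNReal.toReal_mul, Measure.real]
    rw [ENNReal.toReal_ofReal (by positivity)]
  subst hgdef
  have hsq : Tendsto (fun n : ℕ => ((n : ℝ) / a n) *
      ∑ i, ∑ j, (P n).real (B i ∩ B j) * (c i * c j)) atTop
      (𝓝 (∑ i, ∑ j, μ.real (B i ∩ B j) * (c i * c j))) := by
    simp_rw [Finset.mul_sum, ← mul_assoc]
    refine tendsto_finsetSum _ fun i _ => tendsto_finsetSum _ fun j _ => ?_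
    exact ((key _ ((hBmeas i).inter (hBmeas j))
      ((measure_mono Set.inter_subset_left).trans_lt (hBfin i))).mul_const _).mul_const _
  have hone : Tendsto (fun n : ℕ => ((n : ℝ) / a n) *
      ∑ i, (P n).real (B i) * c i) atTop (𝓝 (∑ i, μ.real (B i) * c i)) := by
    simp_rw [Finset.mul_sum, ← mul_assoc]
    exact tendsto_finsetSum _ fun i _ => (key _ (hBmeas i) (hBfin i)).mul_const _
  have hfin := hsq.sub ((hone.pow 2).mul han)
  rw [mul_zero, sub_zero] at hfin
  simp only
  rw [aux_int_sq μ m c B hBmeas hBfin]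
  refine hfin.congr' ?_
  filter_upwards [eventually_ge_atTop 1] with n hn
  have h1 := hpos n hn
  have h2 : (0 : ℝ) < n := by exact_mod_cast hn
  rw [aux_int_sq (P n) m c B hBmeas (fun i => measure_lt_top _ _),
    aux_int (P n) m c B hBmeas (fun i => measure_lt_top _ _)]
  field_simp
end

section
/- Let P be a probability measure on a measurable space (E, 𝓔), let k_1, k_2 ≥ 1, let 0 ≤ l ≤ min(k_1, k_2), and let 𝒩 be a diagram with l edges between {1,…,k_1} and {1,…,k_2}. Then for all f ∈ L²(P^{k_1}) and g ∈ L²(P^{k_2}), ∫_{E^{k_1+k_2−l}} |(f⊗g)_{B(𝒩)}| dP^{k_1+k_2−l} ≤ ‖f‖_{L²(P^{k_1})} · ‖g‖_{L²(P^{k_2})}. -/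
open MeasureTheory Filter Topology
open scoped ENNReal NNReal

/-- Given a diagram, i.e. a pair of injections `j1 : Fin l ↪ Fin k1`, `j2 : Fin l ↪ Fin k2`,
substitute the variable `x (j1 s)` for the variable `z (j2 s)` for each edge `s`.
Integrating `f x * g (subst j1 j2 x z)` over `(x, z) ∈ E^{k1} × E^{k2}` with respect to a
product of probability measures realizes the integral of `(f ⊗ g)_{B(𝒩)}` over
`E^{k1+k2-l}` (the `l` matched `z`-coordinates become dummy variables). -/
noncomputable def subst {E : Type*} {k1 k2 l : ℕ} (j1 : Fin l ↪ Fin k1) (j2 : Fin l ↪ Fin k2)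
    (x : Fin k1 → E) (z : Fin k2 → E) : Fin k2 → E :=
  fun i => if h : ∃ s, j2 s = i then x (j1 (Classical.choose h)) else z i

/-- Precomposition with an injection preserves powers of a probability measure. -/
theorem mp_comp_inj {E ι κ : Type*} [Fintype ι] [Fintype κ] [MeasurableSpace E] (P : Measure E)
    [IsProbabilityMeasure P] (φ : ι → κ) (hφ : Function.Injective φ) :
    MeasurePreserving (fun (w : κ → E) (i : ι) => w (φ i))
      (Measure.pi fun _ : κ => P) (Measure.pi fun _ : ι => P) := by
  have hm : Measurable (fun (w : κ → E) (i : ι) => w (φ i)) := by fun_prop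
  refine ⟨hm, (Measure.pi_eq fun s hs => ?_).symm⟩
  rw [Measure.map_apply hm (MeasurableSet.univ_pi hs)]
  have hpre : (fun (w : κ → E) (i : ι) => w (φ i)) ⁻¹' (Set.univ.pi s) =
      Set.univ.pi (Function.extend φ s (fun _ => Set.univ)) := by
    ext w
    simp only [Set.mem_preimage, Set.mem_univ_pi]
    constructor
    · intro h c
      by_cases hc : ∃ i, φ i = c
      · obtain ⟨i, rfl⟩ := hc
        rw [hφ.extend_apply]
        exact h i
      · rw [Function.extend_apply' _ _ _ hc]
        trivial
    · intro h i
      have := h (φ i)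
      rwa [hφ.extend_apply] at this
  rw [hpre, Measure.pi_pi]
  symm
  apply Fintype.prod_of_injective φ hφ
  · intro c hc
    rw [Function.extend_apply' _ _ _ (by simpa using hc)]
    simp
  · intro i
    rw [hφ.extend_apply]

theorem mp_subst {E : Type*} [MeasurableSpace E] (P : Measure E) [IsProbabilityMeasure P]
    {k1 k2 l : ℕ} (j1 : Fin l ↪ Fin k1) (j2 : Fin l ↪ Fin k2) :
    MeasurePreserving (fun q : (Fin k1 → E) × (Fin k2 → E) => subst j1 j2 q.1 q.2)
      ((Measure.pi fun _ : Fin k1 => P).prod (Measure.pi fun _ : Fin k2 => P))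
      (Measure.pi fun _ : Fin k2 => P) := by
  classical
  let φ : Fin k2 → Fin k1 ⊕ Fin k2 := fun i =>
    if h : ∃ s, j2 s = i then Sum.inl (j1 (Classical.choose h)) else Sum.inr i
  have hφ : Function.Injective φ := by
    intro a b hab
    simp only [φ] at hab
    split_ifs at hab with ha hb hb
    · have := j1.injective (Sum.inl.inj hab)
      rw [← Classical.choose_spec ha, this, Classical.choose_spec hb]
    · exact Sum.inr.inj hab
  have h2 := measurePreserving_sumPiEquivProdPi_symm
    (X := fun _ : Fin k1 ⊕ Fin k2 => E) (fun _ => P)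
  have h3 := (mp_comp_inj P φ hφ).comp h2
  convert h3 using 1
  funext q i
  simp only [subst, Function.comp, φ]
  split_ifs <;> rfl

/-- For a probability measure `P`, a diagram `(j1, j2)` with `l` edges and
`f ∈ L²(P^{k1})`, `g ∈ L²(P^{k2})`, the integral of `|(f ⊗ g)_{B(𝒩)}|` over
`E^{k1+k2-l}` with respect to `P^{k1+k2-l}` is at most `‖f‖_{L²(P^{k1})} ‖g‖_{L²(P^{k2})}`. -/
theorem lintegral_diagram_le
    {E : Type*} [MeasurableSpace E] (P : Measure E) [IsProbabilityMeasure P]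
    (k1 k2 l : ℕ) (hk1 : 1 ≤ k1) (hk2 : 1 ≤ k2) (hl1 : l ≤ k1) (hl2 : l ≤ k2)
    (j1 : Fin l ↪ Fin k1) (j2 : Fin l ↪ Fin k2)
    (f : (Fin k1 → E) → ℝ) (g : (Fin k2 → E) → ℝ)
    (hf : MemLp f 2 (Measure.pi fun _ : Fin k1 => P))
    (hg : MemLp g 2 (Measure.pi fun _ : Fin k2 => P)) :
    ∫⁻ q : (Fin k1 → E) × (Fin k2 → E),
        ENNReal.ofReal |f q.1 * g (subst j1 j2 q.1 q.2)|
        ∂((Measure.pi fun _ : Fin k1 => P).prod (Measure.pi fun _ : Fin k2 => P)) ≤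
      eLpNorm f 2 (Measure.pi fun _ : Fin k1 => P) *
        eLpNorm g 2 (Measure.pi fun _ : Fin k2 => P) := by
  have h1 := hf.1.comp_measurePreserving
    (measurePreserving_fst (μ := Measure.pi fun _ : Fin k1 => P)
      (ν := Measure.pi fun _ : Fin k2 => P))
  have h2 := hg.1.comp_measurePreserving (mp_subst P j1 j2)
  have h := eLpNorm_smul_le_mul_eLpNorm (p := 2) (q := 2) (r := 1) h2 h1
  rw [eLpNorm_comp_measurePreserving hf.1 measurePreserving_fst,
    eLpNorm_comp_measurePreserving hg.1 (mp_subst P j1 j2), eLpNorm_one_eq_lintegral_enorm] at h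
  refine le_trans (le_of_eq (lintegral_congr fun q => ?_)) h
  rw [← Real.norm_eq_abs, ofReal_norm_eq_enorm]
  rfl
end
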